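/- Define F : [0,1] → ℝ by F(t) = 0.68145/√(1 − 0.53562·t). Then: (a) F is nonnegative, monotone increasing, and convex on [0,1]; (b) ∫₀¹ F(t) dt ≤ 1/1.2337; and (c) F(1) ≤ 1. -/

import Mathlib

noncomputable def F (t : ℝ) : ℝ := 0.68145 / Real.sqrt (1 - 0.53562 * t)

/-!
Since `t ↦ 1 - 0.53562 * t` is positive, decreasing and affine on `[0, 1]`, and `√` is increasing
and concave, `F` is the reciprocal of a positive, decreasing, concave function. Both numerical
bounds rest on `0.68145 ^ 2 ≤ 1 - 0.53562`, that is `0.68145 ≤ √0.46438`: this is `F 1 ≤ 1`, and it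
bounds the exact value `(2 * 0.68145 / 0.53562) * (1 - √0.46438)` of the integral.
-/

open Set

section Convexity

variable {E : Type*} [AddCommMonoid E]

theorem convexOn_inv_of_concaveOn {𝕜 : Type*} [Field 𝕜] [LinearOrder 𝕜] [IsStrictOrderedRing 𝕜]
    [SMul 𝕜 E] {s : Set E} {f : E → 𝕜} (hf : ConcaveOn 𝕜 s f) (hpos : ∀ x ∈ s, 0 < f x) :
    ConvexOn 𝕜 s fun x ↦ (f x)⁻¹ := by
  have hinv : ConvexOn 𝕜 (Ioi 0) fun y : 𝕜 ↦ y⁻¹ := by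
    simpa only [zpow_neg_one] using convexOn_zpow (𝕜 := 𝕜) (-1)
  refine ⟨hf.1, fun x hx y hy a b ha hb hab ↦ ?_⟩
  have hcomb : 0 < a • f x + b • f y := convex_Ioi 0 (hpos x hx) (hpos y hy) ha hb hab
  calc (f (a • x + b • y))⁻¹ ≤ (a • f x + b • f y)⁻¹ :=
        inv_anti₀ hcomb (hf.2 hx hy ha hb hab)
    _ ≤ a • (f x)⁻¹ + b • (f y)⁻¹ := hinv.2 (hpos x hx) (hpos y hy) ha hb hab

variable [SMul ℝ E] {s : Set E} {f : E → ℝ}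

theorem concaveOn_sqrt_of_concaveOn (hf : ConcaveOn ℝ s f) (hnonneg : ∀ x ∈ s, 0 ≤ f x) :
    ConcaveOn ℝ s fun x ↦ √(f x) :=
  ⟨hf.1, fun x hx y hy a b ha hb hab ↦
    calc a • √(f x) + b • √(f y) ≤ √(a • f x + b • f y) :=
          Real.strictConcaveOn_sqrt.concaveOn.2 (hnonneg x hx) (hnonneg y hy) ha hb hab
      _ ≤ √(f (a • x + b • y)) := Real.sqrt_le_sqrt (hf.2 hx hy ha hb hab)⟩

theorem convexOn_const_div_sqrt {c : ℝ} (hc : 0 ≤ c) (hf : ConcaveOn ℝ s f)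
    (hpos : ∀ x ∈ s, 0 < f x) : ConvexOn ℝ s fun x ↦ c / √(f x) := by
  have hsqrt := concaveOn_sqrt_of_concaveOn hf fun x hx ↦ (hpos x hx).le
  simpa only [div_eq_mul_inv, smul_eq_mul] using
    (convexOn_inv_of_concaveOn hsqrt fun x hx ↦ Real.sqrt_pos.2 (hpos x hx)).smul hc

end Convexity

theorem strictMonoOn_const_div_sqrt {α : Type*} [Preorder α] {s : Set α} {f : α → ℝ} {c : ℝ}
    (hc : 0 < c) (hf : StrictAntiOn f s) (hpos : ∀ x ∈ s, 0 < f x) :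
    StrictMonoOn (fun x ↦ c / √(f x)) s := fun _ hx y hy hxy ↦
  div_lt_div_of_pos_left hc (Real.sqrt_pos.2 (hpos y hy))
    (Real.sqrt_lt_sqrt (hpos y hy).le (hf hx hy hxy))

theorem strictAnti_const_sub_mul (a : ℝ) {b : ℝ} (hb : 0 < b) : StrictAnti fun t ↦ a - b * t :=
  fun _ _ hxy ↦ sub_lt_sub_left (mul_lt_mul_of_pos_left hxy hb) a

theorem concaveOn_const_sub_mul {s : Set ℝ} (hs : Convex ℝ s) (a b : ℝ) :
    ConcaveOn ℝ s fun t ↦ a - b * t :=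
  (concaveOn_const a hs).sub ((LinearMap.mulLeft ℝ b).convexOn hs)

theorem integral_inv_sqrt {a b : ℝ} (ha : 0 ≤ a) (hb : 0 ≤ b) :
    ∫ x in a..b, (√x)⁻¹ = 2 * (√b - √a) := by
  have hrpow : EqOn (fun x : ℝ ↦ (√x)⁻¹) (fun x ↦ x ^ (-(1 / 2) : ℝ)) (uIcc a b) := fun x hx ↦ by
    have hx₀ : 0 ≤ x := (le_inf ha hb).trans hx.1
    simp only [Real.sqrt_eq_rpow, Real.rpow_neg hx₀]
  rw [intervalIntegral.integral_congr hrpow, integral_rpow (Or.inl (by norm_num)),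
    Real.sqrt_eq_rpow, Real.sqrt_eq_rpow]
  ring_nf

theorem integral_const_div_sqrt_sub_mul {a b c x y : ℝ} (hb : b ≠ 0) (hx : 0 ≤ a - b * x)
    (hy : 0 ≤ a - b * y) :
    ∫ t in x..y, c / √(a - b * t) = 2 * c / b * (√(a - b * x) - √(a - b * y)) := by
  simp only [div_eq_mul_inv c, intervalIntegral.integral_const_mul]
  rw [intervalIntegral.integral_comp_sub_mul (fun u ↦ (√u)⁻¹) hb, integral_inv_sqrt hy hx,
    smul_eq_mul]
  ring

theorem F_radicand_pos : ∀ t ∈ Icc (0 : ℝ) 1, 0 < 1 - 0.53562 * t := fun t ht ↦ by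
  linarith [ht.2]

theorem F_numerator_le_sqrt : (0.68145 : ℝ) ≤ √(1 - 0.53562 * 1) :=
  Real.le_sqrt_of_sq_le (by norm_num)

theorem integral_F_le : ∫ t in (0 : ℝ)..1, F t ≤ 1 / 1.2337 :=
  calc ∫ t in (0 : ℝ)..1, F t
      = 2 * 0.68145 / 0.53562 * (√(1 - 0.53562 * 0) - √(1 - 0.53562 * 1)) :=
        integral_const_div_sqrt_sub_mul (by norm_num) (by norm_num) (by norm_num)
    _ = 2 * 0.68145 / 0.53562 * (1 - √(1 - 0.53562 * 1)) := by
        rw [mul_zero, sub_zero, Real.sqrt_one]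
    _ ≤ 2 * 0.68145 / 0.53562 * (1 - 0.68145) := by
        gcongr
        exact F_numerator_le_sqrt
    _ ≤ 1 / 1.2337 := by norm_num

theorem F_properties :
    (∀ t ∈ Set.Icc (0:ℝ) 1, 0 ≤ F t) ∧
    StrictMonoOn F (Set.Icc (0:ℝ) 1) ∧
    ConvexOn ℝ (Set.Icc (0:ℝ) 1) F ∧
    (∫ t in (0:ℝ)..1, F t) ≤ 1 / 1.2337 ∧
    F 1 ≤ 1 := by
  refine ⟨fun t _ ↦ ?nonneg, ?strictMono, ?convex, integral_F_le, ?le_one⟩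
  case nonneg => exact div_nonneg (by norm_num) (Real.sqrt_nonneg _)
  case strictMono =>
    exact strictMonoOn_const_div_sqrt (by norm_num)
      ((strictAnti_const_sub_mul 1 (by norm_num)).strictAntiOn _) F_radicand_pos
  case convex =>
    exact convexOn_const_div_sqrt (by norm_num)
      (concaveOn_const_sub_mul (convex_Icc 0 1) 1 0.53562) F_radicand_pos
  case le_one => exact div_le_one_of_le₀ F_numerator_le_sqrt (Real.sqrt_nonneg _)
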